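/- Let p be a prime and X a compact, Hausdorff, totally disconnected topological space. Every ℤ_p-linear map μ from the ℤ_p-module of locally constant functions X → ℤ_p to ℤ_p extends uniquely to a continuous ℤ_p-linear map C(X, ℤ_p) → ℤ_p, where C(X, ℤ_p) carries the supremum metric. -/

import Mathlib

/-!
Density of the locally constant functions gives uniqueness, and reduces existence to a bound
`‖μ g‖ ≤ ‖g‖`. A locally constant function on a compact space attains its norm, at `x` say, and in
`ℤ_p` an element divides every element of smaller or equal norm. Hence `g = g x • h` with `h` again
locally constant, and `‖μ g‖ = ‖g x • μ h‖ ≤ ‖g‖ * ‖μ h‖`, where `‖μ h‖ ≤ 1` because `μ h ∈ ℤ_p`.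
-/

theorem existsUnique_continuousLinearMap_of_norm_le {R E F G : Type*} [Semiring R]
    [AddCommGroup E] [Module R E]
    [SeminormedAddCommGroup F] [Module R F] [ContinuousConstSMul R F]
    [NormedAddCommGroup G] [Module R G] [ContinuousConstSMul R G] [CompleteSpace G]
    {e : E →ₗ[R] F} (he : DenseRange e) (f : E →ₗ[R] G) {C : ℝ}
    (hf : ∀ x, ‖f x‖ ≤ C * ‖e x‖) :
    ∃! f' : F →L[R] G, ∀ x, f' (e x) = f x := by
  let _ : SeminormedAddCommGroup E := .induced E F e
  have e_isometry : Isometry e := AddMonoidHomClass.isometry_of_norm e fun _ ↦ rfl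
  let eL : E →L[R] F := ⟨e, e_isometry.continuous⟩
  let fL : E →L[R] G := ⟨f, AddMonoidHomClass.continuous_of_bound f C hf⟩
  have eL_inducing : IsUniformInducing eL := e_isometry.isUniformInducing
  refine ⟨fL.extend eL, fL.extend_eq he eL_inducing, fun ν hν ↦ ?_⟩
  exact (fL.extend_unique he eL_inducing ν (ContinuousLinearMap.ext hν)).symm

theorem exists_isLocallyConstant_forall_dist_lt (Y : Type*) [PseudoMetricSpace Y]
    [IsUltrametricDist Y] {ε : ℝ} (hε : 0 < ε) :
    ∃ r : Y → Y, IsLocallyConstant r ∧ ∀ y, dist y (r y) < ε := by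
  have ball_nonempty (y : Y) : (Metric.ball y ε).Nonempty := Metric.nonempty_ball.mpr hε
  refine ⟨fun y ↦ (ball_nonempty y).some, ?_, fun y ↦ ?_⟩
  · refine (IsLocallyConstant.iff_eventually_eq _).mpr fun y ↦ ?_
    filter_upwards [Metric.ball_mem_nhds y hε] with z hz
    simp only [IsUltrametricDist.ball_eq_of_mem hz]
  · exact Metric.mem_ball'.mp (ball_nonempty y).some_mem

section

variable {X : Type*} [TopologicalSpace X]

theorem denseRange_locallyConstant_toContinuousMap [CompactSpace X] {Y : Type*}
    [PseudoMetricSpace Y] [IsUltrametricDist Y] :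
    DenseRange (LocallyConstant.toContinuousMap : LocallyConstant X Y → C(X, Y)) := by
  refine fun f ↦ Metric.mem_closure_range_iff.mpr fun ε hε ↦ ?_
  obtain ⟨r, r_locallyConstant, dist_r⟩ := exists_isLocallyConstant_forall_dist_lt Y hε
  refine ⟨⟨r ∘ f, r_locallyConstant.comp_continuous f.continuous⟩, ?_⟩
  exact (ContinuousMap.dist_lt_iff hε).mpr fun x ↦ dist_r (f x)

theorem exists_eq_smul_locallyConstant_of_forall_dvd {R : Type*} [Semigroup R] {a : R}
    {g : LocallyConstant X R} (ha : ∀ x, a ∣ g x) : ∃ h : LocallyConstant X R, g = a • h := by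
  have dvd_imp (b : R) : ∃ c, a ∣ b → b = a * c := by
    by_cases hb : a ∣ b
    · exact hb.imp fun c hc _ ↦ hc
    · exact ⟨b, fun h ↦ absurd h hb⟩
  choose q hq using dvd_imp
  exact ⟨g.map q, LocallyConstant.ext fun x ↦ hq (g x) (ha x)⟩

theorem exists_norm_continuousMap_apply_eq_norm [CompactSpace X] [Nonempty X] {E : Type*}
    [SeminormedAddCommGroup E] (f : C(X, E)) : ∃ x, ‖f x‖ = ‖f‖ := by
  obtain ⟨x, -, hx⟩ :=
    isCompact_univ.exists_isMaxOn Set.univ_nonempty f.continuous.norm.continuousOn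
  refine ⟨x, (f.norm_coe_le_norm x).antisymm ?_⟩
  exact f.norm_le_of_nonempty.mpr fun y ↦ hx (Set.mem_univ y)

variable [CompactSpace X] {R M : Type*} [NormedRing R] [NormedAddCommGroup M] [Module R M]
  [IsBoundedSMul R M]

theorem norm_linearMap_locallyConstant_le (hR : ∀ a b : R, ‖b‖ ≤ ‖a‖ → a ∣ b) {C : ℝ}
    (hM : ∀ m : M, ‖m‖ ≤ C) (μ : LocallyConstant X R →ₗ[R] M) (g : LocallyConstant X R) :
    ‖μ g‖ ≤ C * ‖g.toContinuousMap‖ := by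
  cases isEmpty_or_nonempty X with
  | inl _ =>
    have g_eq_zero : g = 0 := LocallyConstant.ext isEmptyElim
    rw [g_eq_zero, map_zero, norm_zero, norm_of_subsingleton, mul_zero]
  | inr _ =>
    obtain ⟨x, hx⟩ := exists_norm_continuousMap_apply_eq_norm g.toContinuousMap
    obtain ⟨h, hgh⟩ : ∃ h : LocallyConstant X R, g = g x • h :=
      exists_eq_smul_locallyConstant_of_forall_dvd fun y ↦
        hR _ _ ((g.toContinuousMap.norm_coe_le_norm y).trans_eq hx.symm)
    calc
      ‖μ g‖ = ‖g x • μ h‖ := by rw [← map_smul, ← hgh]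
      _ ≤ ‖g x‖ * ‖μ h‖ := norm_smul_le _ _
      _ ≤ ‖g x‖ * C := by gcongr; exact hM _
      _ = C * ‖g.toContinuousMap‖ := by rw [← hx, mul_comm]; rfl

theorem measure_extends_general [IsUltrametricDist R] (hR : ∀ a b : R, ‖b‖ ≤ ‖a‖ → a ∣ b)
    [CompleteSpace M] [BoundedSpace M] (μ : LocallyConstant X R →ₗ[R] M) :
    ∃! μ' : C(X, R) →L[R] M, ∀ g : LocallyConstant X R, μ' g.toContinuousMap = μ g := by
  obtain ⟨C, hC⟩ := (BoundedSpace.bounded_univ (α := M)).exists_norm_le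
  exact existsUnique_continuousLinearMap_of_norm_le
    (e := LocallyConstant.toContinuousMapLinearMap R)
    denseRange_locallyConstant_toContinuousMap μ
    (norm_linearMap_locallyConstant_le hR (fun m ↦ hC m trivial) μ)

end

theorem padicInt_dvd_of_norm_le {p : ℕ} [Fact p.Prime] {a b : ℤ_[p]} (hab : ‖b‖ ≤ ‖a‖) :
    a ∣ b := by
  by_cases ha : a = 0
  · have hb : b = 0 := by simpa [ha] using hab
    rw [hb]
    exact dvd_zero a
  · have quotient_norm_le_one : ‖(b : ℚ_[p]) / a‖ ≤ 1 := by
      rw [norm_div]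
      exact div_le_one_of_le₀ hab (norm_nonneg _)
    refine ⟨⟨b / a, quotient_norm_le_one⟩, PadicInt.ext ?_⟩
    exact (mul_div_cancel₀ _ (PadicInt.coe_ne_zero.mpr ha)).symm

/-- For a compact Hausdorff totally disconnected space `X`, every `ℤ_p`-linear
functional on the module of locally constant functions `X → ℤ_p` extends uniquely
to a continuous `ℤ_p`-linear functional on `C(X, ℤ_p)` (with the supremum metric,
i.e. the compact-open topology). -/
theorem measure_extends (p : ℕ) [Fact p.Prime] (X : Type*) [TopologicalSpace X]
    [CompactSpace X] [T2Space X] [TotallyDisconnectedSpace X]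
    (μ : LocallyConstant X ℤ_[p] →ₗ[ℤ_[p]] ℤ_[p]) :
    ∃! μ' : C(X, ℤ_[p]) →L[ℤ_[p]] ℤ_[p],
      ∀ g : LocallyConstant X ℤ_[p], μ' g.toContinuousMap = μ g :=
  measure_extends_general (fun _ _ ↦ padicInt_dvd_of_norm_le) μ
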